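/- Let Φ : ℝ^d → ℝ be differentiable with L_Φ-Lipschitz gradient, bounded below by Φ*, let S_o > 0, ω ≥ 0 with ω ≤ ε² for some ε > 0, let q ≥ 1 be an integer, set η = 1/max(√(6 S_o q), 2 L_Φ), and let x_0, F_0, …, F_{T−1} ∈ ℝ^d define iterates x_{t+1} = x_t − η F_t. Suppose that for every t with 0 ≤ t ≤ T−1, ‖F_t − ∇Φ(x_t)‖² ≤ ω + 3 S_o η² Σ_{s = ⌊t/q⌋·q}^{t−1} ‖F_s‖², and that T ≥ (2 (Φ(x_0) − Φ*)/ε²) · max(√(6 S_o q), 2 L_Φ). Then (1/T) Σ_{t=0}^{T−1} ‖∇Φ(x_t)‖² ≤ 2 ε². -/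

import Mathlib

open scoped BigOperators


theorem aux_descent {E : Type*} [NormedAddCommGroup E] [InnerProductSpace ℝ E] [CompleteSpace E]
    (Φ : E → ℝ) (L : ℝ) (hΦ : Differentiable ℝ Φ)
    (hlip : ∀ x x', ‖gradient Φ x - gradient Φ x'‖ ≤ L * ‖x - x'‖) (x v : E) :
    Φ (x + v) ≤ Φ x + inner ℝ (gradient Φ x) v + L / 2 * ‖v‖ ^ 2 := by
  have hd : ∀ s : ℝ, HasDerivAt
      (fun s : ℝ => Φ (x + s • v) - s * inner ℝ (gradient Φ x) v - L / 2 * ‖v‖ ^ 2 * s ^ 2)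
      (inner ℝ (gradient Φ (x + s • v)) v - inner ℝ (gradient Φ x) v - L * ‖v‖ ^ 2 * s) s := by
    intro s
    have h1 : HasDerivAt (fun s : ℝ => x + s • v) v s := by
      simpa using ((hasDerivAt_id s).smul_const v).const_add x
    have h2 := (hΦ (x + s • v)).hasGradientAt.hasFDerivAt.comp_hasDerivAt s h1
    have h3 := (hasDerivAt_id s).mul_const (inner ℝ (gradient Φ x) v)
    have h4 := ((hasDerivAt_id s).pow 2).const_mul (L / 2 * ‖v‖ ^ 2)
    have h5 := (h2.sub h3).sub h4
    refine (h5.congr_deriv ?_)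
    simp
    ring
  have ha : AntitoneOn
      (fun s : ℝ => Φ (x + s • v) - s * inner ℝ (gradient Φ x) v - L / 2 * ‖v‖ ^ 2 * s ^ 2)
      (Set.Ici 0) := by
    apply antitoneOn_of_deriv_nonpos (convex_Ici 0)
    · exact fun s _ => (hd s).continuousAt.continuousWithinAt
    · exact fun s _ => (hd s).differentiableAt.differentiableWithinAt
    · intro s hs
      rw [interior_Ici] at hs
      have hs' : 0 < s := hs
      rw [(hd s).deriv, ← inner_sub_left]
      have h1 := real_inner_le_norm (gradient Φ (x + s • v) - gradient Φ x) v
      have h2 := hlip (x + s • v) x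
      rw [add_sub_cancel_left, norm_smul, Real.norm_of_nonneg hs'.le] at h2
      have h3 := mul_le_mul_of_nonneg_right h2 (norm_nonneg v)
      nlinarith
  have h := ha (Set.mem_Ici.2 le_rfl) (Set.mem_Ici.2 zero_le_one) zero_le_one
  simp only [one_smul, zero_smul, add_zero, one_mul, zero_mul, one_pow] at h
  linarith

theorem aux_sum (a : ℕ → ℝ) (ha : ∀ s, 0 ≤ a s) (q T : ℕ) (hq : 1 ≤ q) :
    ∑ t ∈ Finset.range T, ∑ s ∈ Finset.Ico (t / q * q) t, a s
      ≤ q * ∑ s ∈ Finset.range T, a s := by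
  rw [Finset.sum_comm' (t' := Finset.range T)
    (s' := fun s => (Finset.range T).filter (fun t => t / q * q ≤ s ∧ s < t))]
  · rw [Finset.mul_sum]
    refine Finset.sum_le_sum fun s _ => ?_
    rw [Finset.sum_const, nsmul_eq_mul]
    refine mul_le_mul_of_nonneg_right ?_ (ha s)
    have hsub : (Finset.range T).filter (fun t => t / q * q ≤ s ∧ s < t)
        ⊆ Finset.Ioc s (s + q) := by
      intro t ht
      simp only [Finset.mem_filter, Finset.mem_range, Finset.mem_Ioc] at ht ⊢
      have h1 := Nat.div_add_mod' t q
      have h2 := Nat.mod_lt t hq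
      omega
    have := Finset.card_le_card hsub
    rw [Nat.card_Ioc] at this
    exact_mod_cast (by omega)
  · intro t s
    simp only [Finset.mem_filter, Finset.mem_range, Finset.mem_Ico]
    constructor
    · rintro ⟨h1, h2, h3⟩
      exact ⟨⟨h1, h2, h3⟩, by omega⟩
    · rintro ⟨⟨h1, h2, h3⟩, _⟩
      exact ⟨h1, h2, h3⟩

/-- Online-case convergence theorem (deterministic per-trajectory form): with accumulated
estimation error `ω ≤ ε²`, stepsize `η = 1/max(√(6 S_o q), 2 L_Φ)` and
`T ≥ (2(Φ(x_0) − Φ*)/ε²)·max(√(6 S_o q), 2 L_Φ)`, the average squared gradient norm is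
at most `2ε²`. -/
theorem sarah_compositional_online_convergence
    (d : ℕ) (LΦ η Φstar So ω ε : ℝ) (q T : ℕ) (hq : 1 ≤ q) (hT : 1 ≤ T)
    (hLΦ : 0 ≤ LΦ) (hSo : 0 < So) (hε : 0 < ε) (hω : 0 ≤ ω) (hωε : ω ≤ ε ^ 2)
    (hη : η = 1 / max (Real.sqrt (6 * So * (q : ℝ))) (2 * LΦ))
    (Φ : EuclideanSpace ℝ (Fin d) → ℝ) (hΦ : Differentiable ℝ Φ)
    (hlip : ∀ x x', ‖gradient Φ x - gradient Φ x'‖ ≤ LΦ * ‖x - x'‖)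
    (hbound : ∀ x, Φstar ≤ Φ x)
    (x F : ℕ → EuclideanSpace ℝ (Fin d))
    (hupd : ∀ t < T, x (t + 1) = x t - η • F t)
    (herr : ∀ t < T, ‖F t - gradient Φ (x t)‖ ^ 2
        ≤ ω + 3 * So * η ^ 2 * ∑ s ∈ Finset.Ico (t / q * q) t, ‖F s‖ ^ 2)
    (hTlarge : 2 * (Φ (x 0) - Φstar) / ε ^ 2
        * max (Real.sqrt (6 * So * (q : ℝ))) (2 * LΦ) ≤ (T : ℝ)) :
    (1 / (T : ℝ)) * ∑ t ∈ Finset.range T, ‖gradient Φ (x t)‖ ^ 2 ≤ 2 * ε ^ 2 := by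
  set M := max (Real.sqrt (6 * So * (q : ℝ))) (2 * LΦ) with hM
  have hqR : (1 : ℝ) ≤ q := by exact_mod_cast hq
  have hTR : (1 : ℝ) ≤ T := by exact_mod_cast hT
  have h6 : 0 < 6 * So * (q : ℝ) := by positivity
  have hM1 : Real.sqrt (6 * So * (q : ℝ)) ≤ M := le_max_left _ _
  have hM2 : 2 * LΦ ≤ M := le_max_right _ _
  have hM0 : 0 < M := lt_of_lt_of_le (Real.sqrt_pos.2 h6) hM1
  have hM3 : 6 * So * (q : ℝ) ≤ M ^ 2 := (Real.sqrt_le_left hM0.le).1 hM1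
  have hη0 : 0 < η := by rw [hη]; positivity
  have hηM : η * M = 1 := by rw [hη]; field_simp
  have hL : η * (2 * LΦ) ≤ 1 := hηM ▸ mul_le_mul_of_nonneg_left hM2 hη0.le
  have hS : η ^ 2 * (6 * So * (q : ℝ)) ≤ 1 := by
    have := mul_le_mul_of_nonneg_left hM3 (sq_nonneg η)
    rwa [← mul_pow, hηM, one_pow] at this
  have hstep : ∀ t < T, ‖gradient Φ (x t)‖ ^ 2 ≤ 2 * M * (Φ (x t) - Φ (x (t + 1)))
      - 1 / 2 * ‖F t‖ ^ 2 + ‖F t - gradient Φ (x t)‖ ^ 2 := by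
    intro t ht
    have h1 := aux_descent Φ LΦ hΦ hlip (x t) (-(η • F t))
    rw [← sub_eq_add_neg, ← hupd t ht, inner_neg_right, real_inner_smul_right, norm_neg,
      norm_smul, Real.norm_of_nonneg hη0.le] at h1
    have h2 := norm_sub_sq_real (F t) (gradient Φ (x t))
    rw [real_inner_comm] at h2
    have h3 := mul_le_mul_of_nonneg_left h1 hM0.le
    have h4 : M * (LΦ / 2 * (η * ‖F t‖) ^ 2) = η * (2 * LΦ) / 4 * ‖F t‖ ^ 2 := by
      linear_combination LΦ / 2 * η * ‖F t‖ ^ 2 * hηM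
    have h5 : M * (η * inner ℝ (gradient Φ (x t)) (F t)) = inner ℝ (gradient Φ (x t)) (F t) := by
      linear_combination inner ℝ (gradient Φ (x t)) (F t) * hηM
    have h7 := mul_le_mul_of_nonneg_right hL (sq_nonneg ‖F t‖)
    rw [h2]
    linarith
  have hsum := Finset.sum_le_sum fun t ht => hstep t (Finset.mem_range.1 ht)
  have herrs := Finset.sum_le_sum fun t ht => herr t (Finset.mem_range.1 ht)
  rw [Finset.sum_add_distrib, Finset.sum_sub_distrib, ← Finset.mul_sum, ← Finset.mul_sum,
    Finset.sum_range_sub'] at hsum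
  rw [Finset.sum_add_distrib, ← Finset.mul_sum, Finset.sum_const, Finset.card_range,
    nsmul_eq_mul] at herrs
  have hdbl := mul_le_mul_of_nonneg_left
    (aux_sum (fun s => ‖F s‖ ^ 2) (fun s => sq_nonneg _) q T hq)
    (by positivity : 0 ≤ 3 * So * η ^ 2)
  have hA : 0 ≤ ∑ t ∈ Finset.range T, ‖F t‖ ^ 2 := Finset.sum_nonneg fun _ _ => sq_nonneg _
  have hSA := mul_le_mul_of_nonneg_right hS hA
  have hTω : (T : ℝ) * ω ≤ T * ε ^ 2 := mul_le_mul_of_nonneg_left hωε (by positivity)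
  have hb : 2 * M * Φstar ≤ 2 * M * Φ (x T) := mul_le_mul_of_nonneg_left (hbound _) (by positivity)
  have hTl : 2 * M * (Φ (x 0) - Φstar) ≤ T * ε ^ 2 := by
    have := mul_le_mul_of_nonneg_right hTlarge (sq_nonneg ε)
    have e : 2 * (Φ (x 0) - Φstar) / ε ^ 2 * M * ε ^ 2 = 2 * M * (Φ (x 0) - Φstar) := by
      field_simp
    rwa [e] at this
  rw [one_div, inv_mul_le_iff₀ (by positivity)]
  linarith
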